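/- Let p be a prime, R a nontrivial commutative ring and q ∈ R with (p)_q = 0 and R q-divisible. Let A = R[x], σ(x) = qx, ∂_σ(x^n) = (n)_q x^{n−1}, and let D = D_{A,σ} be the Ore extension. Then: (a) an element Σ_k a_k∂^k of D commutes with every element of A if and only if a_k = 0 whenever p does not divide k; that is, the centralizer of A in D is the free A-module with basis (∂^{pk})_{k∈ℕ} (the polynomial subalgebra A[∂^p]); (b) the center of D is exactly the set of elements Σ_k b_k∂^{pk} with all b_k in the subring R[x^p] of R[x] (the polynomial subalgebra R[x^p][∂^p]). (Description of the centralizer of A and of the center of the ring of q-twisted differential operators via the twisted p-curvature θ ↦ ∂_σ^p.) -/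

import Mathlib

/-- The `q`-integer `(n)_q = 1 + q + ⋯ + q^{n-1}`. -/
def qInt {S : Type*} [CommRing S] (q : S) (n : ℕ) : S :=
  ∑ i ∈ Finset.range n, q ^ i

/-!
Write `f = Σ a_k ∂^k`. Since `∂^k x = q^k x ∂^k + (k)_q ∂^{k-1}` and `q^k - 1 = (q - 1) (k)_q`, the
coefficients `c_k` of `f x - x f` are `c_k = (q - 1) x u_k + u_{k+1}` with `u_k = (k)_q a_k`. On the
other hand `σ = id + (q - 1) x ∂_σ`, so the coefficients of `∂ f - f ∂` are `∂_σ(a_0)` and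
`(q - 1) x v_k + v_{k+1}` with `v_k = ∂_σ(a_k)`. As `u_0 = 0`, both recursions unwind: `f` commutes
with `x` iff all `(k)_q a_k` vanish, and with `∂` iff all `∂_σ(a_k)` vanish, whatever `q` is.

When `(p)_q = 0` for a prime `p`, the Euclidean algorithm shows that `(m)_q = 0` only if `p ∣ m`, so
that by `q`-divisibility `(m)_q` is `0` or a unit according to whether `p` divides `m` or not. Then
`(k)_q a_k = 0` for all `k` says that `f` is supported on the multiples of `p`, and, as `∂_σ`
multiplies the coefficient of `x^n` by `(n)_q`, `∂_σ(a_k) = 0` says that `a_k` lies in `R[x^p]`.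
-/

open Polynomial Module

section QInt

variable {R : Type*} [CommRing R] {q : R}

lemma qInt_zero (q : R) : qInt q 0 = 0 := by simp [qInt]

lemma qInt_one (q : R) : qInt q 1 = 1 := by simp [qInt]

lemma qInt_succ (q : R) (n : ℕ) : qInt q (n + 1) = qInt q n + q ^ n := by
  simp [qInt, Finset.sum_range_succ]

lemma qInt_add (q : R) (m n : ℕ) : qInt q (m + n) = qInt q m + q ^ m * qInt q n := by
  simp [qInt, Finset.sum_range_add, Finset.mul_sum, pow_add]

lemma pow_eq_one_add_mul_qInt (q : R) (n : ℕ) : q ^ n = 1 + (q - 1) * qInt q n := by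
  rw [qInt, mul_geom_sum, add_sub_cancel]

lemma qInt_dvd_qInt (q : R) {m n : ℕ} (h : m ∣ n) : qInt q m ∣ qInt q n := by
  obtain ⟨c, rfl⟩ := h
  induction c with
  | zero => simp [qInt_zero]
  | succ c ih =>
    rw [Nat.mul_succ, qInt_add]
    exact dvd_add ih (dvd_mul_left _ _)

lemma qInt_eq_zero_of_dvd {m n : ℕ} (hm : qInt q m = 0) (h : m ∣ n) : qInt q n = 0 :=
  zero_dvd_iff.mp (hm ▸ qInt_dvd_qInt q h)

lemma qInt_gcd_eq_zero {m n : ℕ} (hm : qInt q m = 0) (hn : qInt q n = 0) :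
    qInt q (m.gcd n) = 0 := by
  induction m, n using Nat.gcd.induction with
  | H0 n => rwa [Nat.gcd_zero_left]
  | H1 m n _ ih =>
    have hmod : qInt q (n % m) = 0 := by
      have h := qInt_add q (n % m) (m * (n / m))
      rw [Nat.mod_add_div, qInt_eq_zero_of_dvd hm (dvd_mul_right _ _), hn, mul_zero, add_zero] at h
      exact h.symm
    rw [Nat.gcd_rec]
    exact ih hmod hm

lemma qInt_ne_zero_of_coprime [Nontrivial R] {m n : ℕ} (hm : qInt q m = 0) (h : m.Coprime n) :
    qInt q n ≠ 0 := fun hn ↦ by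
  have h_gcd := qInt_gcd_eq_zero hm hn
  rw [h.gcd_eq_one, qInt_one] at h_gcd
  exact one_ne_zero h_gcd

lemma qInt_smul_eq_zero_iff {p : ℕ} (hpq : qInt q p = 0)
    (hunit : ∀ m, ¬ p ∣ m → IsUnit (qInt q m)) {M : Type*} [AddCommGroup M] [Module R M]
    (n : ℕ) (a : M) : qInt q n • a = 0 ↔ (¬ p ∣ n → a = 0) := by
  by_cases hn : p ∣ n
  · simp [hn, qInt_eq_zero_of_dvd hpq hn]
  · simp [hn, (hunit n hn).smul_eq_zero]

end QInt

section QDerivative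

variable {R : Type*} [CommRing R] {q : R} {D : R[X] →ₗ[R] R[X]}

lemma coeff_qDerivative (hD : ∀ n : ℕ, D (X ^ n) = qInt q n • X ^ (n - 1)) (a : R[X]) (n : ℕ) :
    (D a).coeff n = qInt q (n + 1) * a.coeff (n + 1) := by
  induction a using Polynomial.induction_on' with
  | add a b ha hb => simp [ha, hb, mul_add]
  | monomial m c =>
    rw [← C_mul_X_pow_eq_monomial, ← smul_eq_C_mul, map_smul, hD]
    rcases m with _ | m
    · simp [qInt_zero, coeff_one]
    · by_cases h : n = m
      · simp [h, mul_comm]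
      · simp [coeff_X_pow, h]

lemma qDerivative_eq_zero_iff (hD : ∀ n : ℕ, D (X ^ n) = qInt q n • X ^ (n - 1)) (a : R[X]) :
    D a = 0 ↔ ∀ n, qInt q n • a.coeff n = 0 := by
  simp only [Polynomial.ext_iff, coeff_qDerivative hD, coeff_zero, smul_eq_mul]
  refine ⟨fun h n ↦ ?_, fun h n ↦ h (n + 1)⟩
  rcases n with _ | n
  · rw [qInt_zero, zero_mul]
  · exact h n

lemma qDilation_eq_add_mul_qDerivative {σ : R[X] →ₐ[R] R[X]} (hσ : σ X = C q * X)
    (hD : ∀ n : ℕ, D (X ^ n) = qInt q n • X ^ (n - 1)) (a : R[X]) :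
    σ a = a + C (q - 1) * X * D a := by
  induction a using Polynomial.induction_on' with
  | add a b ha hb => rw [map_add, map_add, ha, hb]; ring
  | monomial n c =>
    rw [← C_mul_X_pow_eq_monomial, ← smul_eq_C_mul, map_smul, map_smul, map_pow, hσ, hD, mul_pow,
      ← C_pow, pow_eq_one_add_mul_qInt, mul_smul_comm, ← smul_add]
    rcases n with _ | n
    · simp [qInt_zero]
    · simp only [smul_eq_C_mul, C_add, C_mul, C_1, Nat.add_sub_cancel]
      ring

lemma mem_adjoin_X_pow_iff (p : ℕ) (a : R[X]) :
    a ∈ Algebra.adjoin R {(X : R[X]) ^ p} ↔ ∀ n, ¬ p ∣ n → a.coeff n = 0 := by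
  refine ⟨fun ha n hn ↦ ?_, fun h ↦ ?_⟩
  · rw [Algebra.adjoin_singleton_eq_range_aeval] at ha
    obtain ⟨g, rfl⟩ := ha
    rw [AlgHom.toRingHom_eq_coe, RingHom.coe_coe, aeval_eq_sum_range, finsetSum_coeff]
    refine Finset.sum_eq_zero fun i _ ↦ ?_
    have hni : n ≠ p * i := fun h ↦ hn ⟨i, h⟩
    rw [coeff_smul, ← pow_mul, coeff_X_pow, if_neg hni, smul_zero]
  · rw [a.as_sum_support_C_mul_X_pow]
    refine Subalgebra.sum_mem _ fun n hn ↦ ?_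
    obtain ⟨c, rfl⟩ : p ∣ n := not_imp_comm.mp (h n) (mem_support_iff.mp hn)
    rw [← smul_eq_C_mul, pow_mul]
    exact Subalgebra.smul_mem _ (pow_mem (Algebra.self_mem_adjoin_singleton _ _) _) _

lemma qDerivative_eq_zero_iff_mem_adjoin {p : ℕ} (hpq : qInt q p = 0)
    (hunit : ∀ m, ¬ p ∣ m → IsUnit (qInt q m))
    (hD : ∀ n : ℕ, D (X ^ n) = qInt q n • X ^ (n - 1)) (a : R[X]) :
    D a = 0 ↔ a ∈ Algebra.adjoin R {(X : R[X]) ^ p} := by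
  simp only [qDerivative_eq_zero_iff hD, mem_adjoin_X_pow_iff, qInt_smul_eq_zero_iff hpq hunit]

end QDerivative

lemma forall_mul_add_succ_eq_zero_iff {A : Type*} [NonUnitalNonAssocSemiring A] {c : A} {u : ℕ → A}
    (h_zero : u 0 = 0) : (∀ k, c * u k + u (k + 1) = 0) ↔ ∀ k, u k = 0 := by
  refine ⟨fun h k ↦ ?_, fun h k ↦ by rw [h, h, mul_zero, add_zero]⟩
  induction k with
  | zero => exact h_zero
  | succ k ih => simpa only [ih, mul_zero, zero_add] using h k

@[elab_as_elim]
lemma basis_induction_linear {ι A E : Type*} [Semiring A] [AddCommMonoid E] [Module A E]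
    (b : Basis ι A E) {P : E → Prop} (f : E) (zero : P 0)
    (add : ∀ f g, P f → P g → P (f + g)) (smul_basis : ∀ (a : A) (i : ι), P (a • b i)) : P f := by
  rw [← b.linearCombination_repr f]
  induction b.repr f using Finsupp.induction_linear with
  | zero => rwa [map_zero]
  | add f g hf hg => rw [map_add]; exact add _ _ hf hg
  | single k a => rw [Finsupp.linearCombination_single]; exact smul_basis a k

/-- The ring `E` is the Ore extension of the `R`-algebra `A` for `σ` and `δ`: it is a free left
`A`-module whose basis `b` consists of the powers `b k = ∂^k` of an element `∂ = b 1` subject to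
`∂ a = σ(a) ∂ + δ(a)`. Under `IsScalarTower A E E` the elements `a • 1` form a copy of `A` in `E`,
and the associativity of `E` makes `δ` a `σ`-derivation. -/
structure IsOreExtension {R A E : Type*} [CommSemiring R] [Semiring A] [Algebra R A] [Semiring E]
    [Module A E] (σ : A →ₐ[R] A) (δ : A →ₗ[R] A) (b : Basis ℕ A E) : Prop where
  basis_zero : b 0 = 1
  basis_mul_basis : ∀ k l, b k * b l = b (k + l)
  basis_one_mul_smul_one : ∀ a : A, b 1 * a • (1 : E) = σ a • b 1 + δ a • (1 : E)

namespace IsOreExtension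

section Semiring

variable {R A E : Type*} [CommSemiring R] [Semiring A] [Algebra R A] [Semiring E] [Module A E]
  {σ : A →ₐ[R] A} {δ : A →ₗ[R] A} {b : Basis ℕ A E}

lemma basis_eq_pow (h : IsOreExtension σ δ b) (k : ℕ) : b k = b 1 ^ k := by
  induction k with
  | zero => rw [h.basis_zero, pow_zero]
  | succ k ih => rw [pow_succ, ← ih, h.basis_mul_basis]

lemma derivation_one (h : IsOreExtension σ δ b) : δ 1 = 0 := by
  have h_one := congrArg (b.repr · 0) (h.basis_one_mul_smul_one 1)
  simpa [← h.basis_zero, h.basis_mul_basis] using h_one.symm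

lemma derivation_algebraMap (h : IsOreExtension σ δ b) (r : R) : δ (algebraMap R A r) = 0 := by
  rw [Algebra.algebraMap_eq_smul_one, map_smul, h.derivation_one, smul_zero]

variable [IsScalarTower A E E]

lemma basis_one_mul_smul (h : IsOreExtension σ δ b) (a : A) (f : E) :
    b 1 * a • f = σ a • (b 1 * f) + δ a • f := by
  rw [← smul_one_mul a f, ← mul_assoc, h.basis_one_mul_smul_one, add_mul, smul_mul_assoc,
    smul_one_mul]

lemma repr_smul_one_mul (b : Basis ℕ A E) (a : A) (f : E) (k : ℕ) :
    b.repr (a • (1 : E) * f) k = a * b.repr f k := by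
  rw [smul_one_mul, map_smul, Finsupp.smul_apply, smul_eq_mul]

lemma repr_mul_basis_one_zero (h : IsOreExtension σ δ b) (f : E) : b.repr (f * b 1) 0 = 0 := by
  induction f using basis_induction_linear b with
  | zero => simp
  | add f g hf hg => simp [add_mul, hf, hg]
  | smul_basis a k => simp [smul_mul_assoc, h.basis_mul_basis]

lemma repr_mul_basis_one_succ (h : IsOreExtension σ δ b) (f : E) (k : ℕ) :
    b.repr (f * b 1) (k + 1) = b.repr f k := by
  induction f using basis_induction_linear b with
  | zero => simp
  | add f g hf hg => simp [add_mul, hf, hg]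
  | smul_basis a m => simp [smul_mul_assoc, h.basis_mul_basis, Finsupp.single_apply]

lemma basis_one_mul_smul_basis (h : IsOreExtension σ δ b) (a : A) (k : ℕ) :
    b 1 * a • b k = σ a • b (k + 1) + δ a • b k := by
  rw [h.basis_one_mul_smul, h.basis_mul_basis, add_comm 1 k]

lemma repr_basis_one_mul_zero (h : IsOreExtension σ δ b) (f : E) :
    b.repr (b 1 * f) 0 = δ (b.repr f 0) := by
  induction f using basis_induction_linear b with
  | zero => simp
  | add f g hf hg => simp [mul_add, hf, hg]
  | smul_basis a m =>
    rw [h.basis_one_mul_smul_basis]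
    by_cases hm : m = 0 <;> simp [hm]

lemma repr_basis_one_mul_succ (h : IsOreExtension σ δ b) (f : E) (k : ℕ) :
    b.repr (b 1 * f) (k + 1) = σ (b.repr f k) + δ (b.repr f (k + 1)) := by
  induction f using basis_induction_linear b with
  | zero => simp
  | add f g hf hg => simp [mul_add, hf, hg, add_add_add_comm]
  | smul_basis a m =>
    rw [h.basis_one_mul_smul_basis]
    by_cases hm : m = k
    · simp [hm]
    · by_cases hm' : m = k + 1 <;> simp [hm, hm']

lemma commute_of_commute_generators (h : IsOreExtension σ δ b) {f : E}
    (h_smul_one : ∀ a : A, Commute f (a • (1 : E))) (h_basis_one : Commute f (b 1)) (g : E) :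
    Commute f g := by
  induction g using basis_induction_linear b with
  | zero => exact Commute.zero_right f
  | add g g' hg hg' => exact hg.add_right hg'
  | smul_basis a k =>
    rw [← smul_one_mul, h.basis_eq_pow]
    exact (h_smul_one a).mul_right (h_basis_one.pow_right k)

lemma commute_algebraMap_smul_one (h : IsOreExtension σ δ b) (r : R) (f : E) :
    Commute (algebraMap R A r • (1 : E)) f := by
  refine h.commute_of_commute_generators (fun a ↦ ?_) ?_ f
  · rw [commute_iff_eq, smul_one_mul, smul_one_mul, smul_smul, smul_smul, Algebra.commutes]
  · rw [commute_iff_eq, h.basis_one_mul_smul_one, h.derivation_algebraMap, AlgHom.commutes,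
      zero_smul, add_zero, smul_one_mul]

lemma commute_polynomial_smul_one [Module R[X] E] [IsScalarTower R[X] E E] {σ : R[X] →ₐ[R] R[X]}
    {δ : R[X] →ₗ[R] R[X]} {b : Basis ℕ R[X] E} (h : IsOreExtension σ δ b) {f : E}
    (hX : Commute f ((X : R[X]) • (1 : E))) (a : R[X]) : Commute f (a • (1 : E)) := by
  induction a using Polynomial.induction_on with
  | C c => exact (h.commute_algebraMap_smul_one c f).symm
  | add a a' ha ha' => rw [add_smul]; exact ha.add_right ha'
  | monomial n c ih =>
    rw [pow_succ, ← mul_assoc, ← smul_smul, ← smul_one_mul]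
    exact ih.mul_right hX

end Semiring

lemma commute_basis_one_iff {R A E : Type*} [CommSemiring R] [Ring A] [Algebra R A] [Semiring E]
    [Module A E] [IsScalarTower A E E] {σ : A →ₐ[R] A} {δ : A →ₗ[R] A} {b : Basis ℕ A E}
    (h : IsOreExtension σ δ b) {y : A} (hσ : ∀ a, σ a = a + y * δ a) (f : E) :
    Commute f (b 1) ↔ ∀ k, δ (b.repr f k) = 0 := by
  have h_repr : Commute f (b 1) ↔ δ (b.repr f 0) = 0 ∧
      ∀ k, y * δ (b.repr f k) + δ (b.repr f (k + 1)) = 0 := by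
    rw [commute_iff_eq, eq_comm, b.ext_elem_iff, ← Nat.and_forall_add_one]
    simp only [h.repr_mul_basis_one_zero, h.repr_mul_basis_one_succ, h.repr_basis_one_mul_zero,
      h.repr_basis_one_mul_succ, hσ, add_assoc, add_eq_left]
  rw [h_repr]
  exact ⟨fun ⟨h_zero, h_succ⟩ ↦ (forall_mul_add_succ_eq_zero_iff h_zero).mp h_succ,
    fun h_all ↦ ⟨h_all 0, (forall_mul_add_succ_eq_zero_iff (h_all 0)).mpr h_all⟩⟩

section QWeyl

variable {R A E : Type*} [CommRing R] [Semiring A] [Algebra R A] [Semiring E] [Module A E]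
  [IsScalarTower A E E] {q : R} {σ : A →ₐ[R] A} {δ : A →ₗ[R] A} {b : Basis ℕ A E} {x : A}

lemma basis_succ_mul_smul_one (h : IsOreExtension σ δ b) (hσ : σ x = q • x) (hδ : δ x = 1)
    (k : ℕ) : b (k + 1) * x • (1 : E) =
      (q ^ (k + 1) • x) • b (k + 1) + algebraMap R A (qInt q (k + 1)) • b k := by
  induction k with
  | zero => simp [h.basis_one_mul_smul_one, hσ, hδ, h.basis_zero, qInt_one]
  | succ k ih =>
    have h_leading : b 1 * (q ^ (k + 1) • x) • b (k + 1) =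
        (q ^ (k + 2) • x) • b (k + 2) + algebraMap R A (q ^ (k + 1)) • b (k + 1) := by
      rw [h.basis_one_mul_smul_basis, map_smul, map_smul, hσ, hδ, smul_smul, ← pow_succ,
        Algebra.algebraMap_eq_smul_one]
    have h_const : b 1 * algebraMap R A (qInt q (k + 1)) • b k =
        algebraMap R A (qInt q (k + 1)) • b (k + 1) := by
      rw [h.basis_one_mul_smul_basis, AlgHom.commutes, h.derivation_algebraMap, zero_smul, add_zero]
    rw [add_comm (k + 1) 1, ← h.basis_mul_basis, mul_assoc, ih, mul_add, h_leading, h_const,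
      h.basis_mul_basis, add_comm 1 (k + 1), qInt_succ q (k + 1),
      map_add (algebraMap R A), add_smul]
    abel

lemma repr_mul_smul_one (h : IsOreExtension σ δ b) (hσ : σ x = q • x) (hδ : δ x = 1)
    (f : E) (k : ℕ) : b.repr (f * x • (1 : E)) k =
      q ^ k • (b.repr f k * x) + qInt q (k + 1) • b.repr f (k + 1) := by
  induction f using basis_induction_linear b with
  | zero => simp
  | add f g hf hg =>
    simp only [add_mul, map_add, Finsupp.add_apply, hf, hg, smul_add]
    abel
  | smul_basis a m =>
    rcases m with _ | m
    · rw [h.basis_zero, smul_one_mul, ← h.basis_zero]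
      by_cases hk : 0 = k
      · simp [← hk]
      · simp [hk]
    · rw [smul_mul_assoc, h.basis_succ_mul_smul_one hσ hδ]
      by_cases hk : m = k
      · simp [hk, Algebra.smul_def, Algebra.commutes]
      · by_cases hk' : m + 1 = k
        · simp [← hk']
        · simp [hk, hk']

end QWeyl

lemma commute_smul_one_iff {R A E : Type*} [CommRing R] [CommRing A] [Algebra R A] [Semiring E]
    [Module A E] [IsScalarTower A E E] {q : R} {σ : A →ₐ[R] A} {δ : A →ₗ[R] A} {b : Basis ℕ A E}
    {x : A} (h : IsOreExtension σ δ b) (hσ : σ x = q • x) (hδ : δ x = 1) (f : E) :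
    Commute f (x • (1 : E)) ↔ ∀ k, qInt q k • b.repr f k = 0 := by
  have h_zero : qInt q 0 • b.repr f 0 = 0 := by rw [qInt_zero, zero_smul]
  rw [← forall_mul_add_succ_eq_zero_iff (c := (q - 1) • x) h_zero, commute_iff_eq, b.ext_elem_iff]
  refine forall_congr' fun k ↦ ?_
  rw [h.repr_mul_smul_one hσ hδ, repr_smul_one_mul, pow_eq_one_add_mul_qInt, add_smul, one_smul,
    mul_comm _ x, add_assoc, add_eq_left, smul_mul_smul_comm]

end IsOreExtension

/-- For nontrivial `R` the conditions on `p` say that `R` is `q`-divisible of `q`-characteristic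
`p`, where `p = 0` means that no `(m)_q` with `m ≠ 0` vanishes. -/
theorem center_of_q_twisted_differential_operators_general {R E : Type*} [CommRing R] {q : R}
    {p : ℕ} (hpq : qInt q p = 0) (hunit : ∀ m, ¬ p ∣ m → IsUnit (qInt q m))
    {σ : R[X] →ₐ[R] R[X]} (hσ : σ X = C q * X) {D : R[X] →ₗ[R] R[X]}
    (hD : ∀ n : ℕ, D (X ^ n) = qInt q n • X ^ (n - 1))
    [Ring E] [Module R[X] E] [IsScalarTower R[X] E E] {b : Basis ℕ R[X] E}
    (h : IsOreExtension σ D b) :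
    (∀ f : E, (∀ a : R[X], Commute f (a • (1 : E))) ↔ ∀ k, ¬ p ∣ k → b.repr f k = 0) ∧
      ∀ f : E, (∀ g : E, Commute f g) ↔ (∀ k, ¬ p ∣ k → b.repr f k = 0) ∧
        ∀ k, b.repr f k ∈ Algebra.adjoin R {(X : R[X]) ^ p} := by
  have hσX : σ X = q • X := by rw [hσ, smul_eq_C_mul]
  have hDX : D X = 1 := by simpa [qInt_one] using hD 1
  have h_centralizer (f : E) :
      (∀ a : R[X], Commute f (a • (1 : E))) ↔ ∀ k, ¬ p ∣ k → b.repr f k = 0 := by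
    simp only [← qInt_smul_eq_zero_iff hpq hunit, ← h.commute_smul_one_iff hσX hDX f]
    exact ⟨fun hf ↦ hf X, h.commute_polynomial_smul_one⟩
  have h_basis_one (f : E) :
      Commute f (b 1) ↔ ∀ k, b.repr f k ∈ Algebra.adjoin R {(X : R[X]) ^ p} := by
    simp only [h.commute_basis_one_iff (qDilation_eq_add_mul_qDerivative hσ hD),
      qDerivative_eq_zero_iff_mem_adjoin hpq hunit hD]
  refine ⟨h_centralizer, fun f ↦ ?_⟩
  rw [← h_centralizer, ← h_basis_one]
  exact ⟨fun hf ↦ ⟨fun _ ↦ hf _, hf _⟩, fun hf ↦ h.commute_of_commute_generators hf.1 hf.2⟩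

/-- `mul` is a multiplication on the free left `A`-module with basis `∂^k = single k 1` that makes
it the Ore extension of `A` for `σ` and `δ`. -/
structure IsOreMul {R A : Type*} [CommSemiring R] [Ring A] [Algebra R A] (σ : A →ₐ[R] A)
    (δ : A →ₗ[R] A) (mul : (ℕ →₀ A) → (ℕ →₀ A) → (ℕ →₀ A)) : Prop where
  add_mul : ∀ f g h, mul (f + g) h = mul f h + mul g h
  mul_add : ∀ f g h, mul f (g + h) = mul f g + mul f h
  mul_assoc : ∀ f g h, mul (mul f g) h = mul f (mul g h)
  one_mul : ∀ f, mul (Finsupp.single 0 1) f = f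
  mul_one : ∀ f, mul f (Finsupp.single 0 1) = f
  smul_mul : ∀ (a : A) f g, mul (a • f) g = a • mul f g
  single_mul_single : ∀ k l, mul (Finsupp.single k 1) (Finsupp.single l 1) =
    Finsupp.single (k + l) 1
  single_one_mul_single : ∀ a, mul (Finsupp.single 1 1) (Finsupp.single 0 a) =
    Finsupp.single 1 (σ a) + Finsupp.single 0 (δ a)

namespace IsOreMul

variable {R A : Type*} [CommSemiring R] [Ring A] [Algebra R A] {σ : A →ₐ[R] A} {δ : A →ₗ[R] A}
  {mul : (ℕ →₀ A) → (ℕ →₀ A) → (ℕ →₀ A)}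

lemma zero_mul (H : IsOreMul σ δ mul) (f : ℕ →₀ A) : mul 0 f = 0 := by
  simpa using H.smul_mul 0 0 f

lemma mul_zero (H : IsOreMul σ δ mul) (f : ℕ →₀ A) : mul f 0 = 0 := by
  simpa using H.mul_add f 0 0

/-- The Ore extension with multiplication `mul`. It is a synonym of `ℕ →₀ A`, as the latter already
carries the pointwise multiplication. -/
def OreRing (_ : IsOreMul σ δ mul) : Type _ := ℕ →₀ A

noncomputable instance (H : IsOreMul σ δ mul) : AddCommGroup H.OreRing :=
  inferInstanceAs (AddCommGroup (ℕ →₀ A))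

noncomputable instance (H : IsOreMul σ δ mul) : Ring H.OreRing where
  __ := (inferInstance : AddCommGroup H.OreRing)
  mul := mul
  one := Finsupp.single 0 1
  left_distrib := H.mul_add
  right_distrib := H.add_mul
  zero_mul := H.zero_mul
  mul_zero := H.mul_zero
  mul_assoc := H.mul_assoc
  one_mul := H.one_mul
  mul_one := H.mul_one

noncomputable instance (H : IsOreMul σ δ mul) : Module A H.OreRing :=
  inferInstanceAs (Module A (ℕ →₀ A))

instance (H : IsOreMul σ δ mul) : IsScalarTower A H.OreRing H.OreRing := ⟨H.smul_mul⟩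

/-- The basis `∂^k` of the Ore extension over `A`. -/
noncomputable def basis (H : IsOreMul σ δ mul) : Basis ℕ A H.OreRing :=
  Finsupp.basisSingleOne

lemma basis_apply (H : IsOreMul σ δ mul) (k : ℕ) :
    H.basis k = (Finsupp.single k 1 : ℕ →₀ A) :=
  congrFun Finsupp.coe_basisSingleOne k

lemma smul_basis (H : IsOreMul σ δ mul) (a : A) (k : ℕ) :
    a • H.basis k = (Finsupp.single k a : ℕ →₀ A) := by
  rw [H.basis_apply]
  exact Finsupp.smul_single_one k a

lemma smul_one (H : IsOreMul σ δ mul) (a : A) :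
    a • (1 : H.OreRing) = (Finsupp.single 0 a : ℕ →₀ A) :=
  Finsupp.smul_single_one 0 a

lemma isOreExtension (H : IsOreMul σ δ mul) : IsOreExtension σ δ H.basis where
  basis_zero := H.basis_apply 0
  basis_mul_basis k l := by
    rw [H.basis_apply, H.basis_apply, H.basis_apply]
    exact H.single_mul_single k l
  basis_one_mul_smul_one a := by
    rw [H.smul_basis, H.smul_one, H.smul_one, H.basis_apply]
    exact H.single_one_mul_single a

end IsOreMul

/-- centralizer of `A` and center of the ring of `q`-twisted differential
operators: let `p` be a prime, `R` a nontrivial commutative ring, `q ∈ R` with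
`(p)_q = 0` and `R` `q`-divisible; `A = R[x]`, `σ(x) = qx`, `∂_σ(x^n) = (n)_q x^{n−1}`,
and `D = D_{A,σ}` the Ore extension (axiomatized below by its multiplication `mul` on the
free left `A`-module `ℕ →₀ A`, `Finsupp.single k 1` representing `∂^k`).  Then:
(a) `Σ_k a_k∂^k` commutes with every element of `A` iff `a_k = 0` whenever `p ∤ k`;
(b) `Σ_k a_k∂^k` is central iff moreover every `a_k` lies in the subring `R[x^p]`. -/
theorem center_of_q_twisted_differential_operators
    (p : ℕ) (hp : p.Prime)
    (R : Type*) [CommRing R] [Nontrivial R] (q : R)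
    (hpq : qInt q p = 0)
    (hdiv : ∀ m : ℕ, 1 ≤ m → qInt q m ≠ 0 → IsUnit (qInt q m))
    (σ : Polynomial R →ₐ[R] Polynomial R)
    (hσ : σ Polynomial.X = Polynomial.C q * Polynomial.X)
    (D : Polynomial R →ₗ[R] Polynomial R)
    (hD : ∀ n : ℕ, D (Polynomial.X ^ n) = qInt q n • Polynomial.X ^ (n - 1))
    (mul : (ℕ →₀ Polynomial R) → (ℕ →₀ Polynomial R) → (ℕ →₀ Polynomial R))
    (hadd₁ : ∀ f g h : ℕ →₀ Polynomial R, mul (f + g) h = mul f h + mul g h)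
    (hadd₂ : ∀ f g h : ℕ →₀ Polynomial R, mul f (g + h) = mul f g + mul f h)
    (hassoc : ∀ f g h : ℕ →₀ Polynomial R, mul (mul f g) h = mul f (mul g h))
    (hone₁ : ∀ f : ℕ →₀ Polynomial R, mul (Finsupp.single 0 1) f = f)
    (hone₂ : ∀ f : ℕ →₀ Polynomial R, mul f (Finsupp.single 0 1) = f)
    (hA : ∀ a b : Polynomial R,
      mul (Finsupp.single 0 a) (Finsupp.single 0 b) = Finsupp.single 0 (a * b))
    (hsmul : ∀ (a : Polynomial R) (f g : ℕ →₀ Polynomial R), mul (a • f) g = a • mul f g)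
    (hpow : ∀ k l : ℕ, mul (Finsupp.single k 1) (Finsupp.single l 1) =
      Finsupp.single (k + l) 1)
    (hcomm : ∀ a : Polynomial R, mul (Finsupp.single 1 1) (Finsupp.single 0 a) =
      Finsupp.single 1 (σ a) + Finsupp.single 0 (D a)) :
    -- (a) the centralizer of `A` is the free `A`-module with basis `(∂^{pk})_{k∈ℕ}`
    (∀ f : ℕ →₀ Polynomial R,
      (∀ a : Polynomial R, mul f (Finsupp.single 0 a) = mul (Finsupp.single 0 a) f) ↔
      (∀ k : ℕ, ¬ p ∣ k → f k = 0)) ∧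
    -- (b) the center of `D` is `R[x^p][∂^p]`
    (∀ f : ℕ →₀ Polynomial R,
      (∀ g : ℕ →₀ Polynomial R, mul f g = mul g f) ↔
      ((∀ k : ℕ, ¬ p ∣ k → f k = 0) ∧
        ∀ k : ℕ, f k ∈ Algebra.adjoin R {(Polynomial.X : Polynomial R) ^ p})) := by
  have H : IsOreMul σ D mul :=
    ⟨hadd₁, hadd₂, hassoc, hone₁, hone₂, hsmul, hpow, hcomm⟩
  have hunit (m : ℕ) (hm : ¬ p ∣ m) : IsUnit (qInt q m) :=
    hdiv m (Nat.pos_of_ne_zero fun h0 ↦ hm (h0 ▸ dvd_zero p))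
      (qInt_ne_zero_of_coprime hpq (hp.coprime_iff_not_dvd.mpr hm))
  have h := center_of_q_twisted_differential_operators_general hpq hunit hσ hD H.isOreExtension
  simp only [H.smul_one] at h
  exact h
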